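/- Let K be a field, k ≥ 1 an integer, n = 4k + 1, R = K[x_1,…,x_n], and let J(P_n) be the cover ideal of the path graph P_n. Then for every integer t ≥ k, depth(R/J(P_n)^t) = 2k. -/

import Mathlib

/-!
Write `R = K[x_1,…,x_n]` and let `m` be the ideal of all variables. By Rees' theorem
(`exists_isRegular_iff_extVanish`) an `R ⧸ I`-regular sequence of length `d` in `m` exists iff
`Ext^i(R ⧸ m, R ⧸ I) = 0` for all `i < d`, so depth estimates reduce to the long exact sequences
of `Ext`. Two short exact sequences are used: the colon sequence
`0 → R ⧸ (I : x) → R ⧸ I → R ⧸ (I + (x)) → 0` and the Mayer–Vietoris sequence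
`0 → R ⧸ (A ∩ B) → R ⧸ A × R ⧸ B → R ⧸ (A + B) → 0`.

All ideals that occur are monomial. They are described by a set `V` of variables and weights
`c u w`: a monomial `x^b` lies in the ideal iff it involves a variable of `V` or satisfies
`c u w ≤ b u + b w` for all `u`, `w` (`wSet`). Adding `x_v` to the ideal enlarges `V`, and the colon
by `x_v` lowers the weights at `v`. As the path is bipartite, `J(P_n) ^ t` is the ideal with
`V = ∅` and weight `t` on every edge (`coverIdeal_path_pow`).

*Lower bound.* If `C` is disjoint from `V` and `C ∪ V` meets every pair of positive weight, then
the quotient has depth at least `n - |V| - |C| - 1` (`EV_wSet_of_cover`, by induction with the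
colon sequence). For `V = ∅` and `C` the `2k` vertices of odd index (numbering from `0`), this is
`2k`.

*Upper bound.* If the depth were at least `2k + 1`, then the same would hold for the colon ideal
`J ^ t : x^a`, for a suitable exponent `a` (`EV_of_balanced`): the colon sequence passes from one
colon ideal to the next as soon as the quotient by the additional variable has depth at least `2k`,
which follows from the lower bound with `V = {v}` and one odd vertex fewer in `C`. For odd `v` this
vertex is `v` itself. For even `v` it is the vertex `w` between `v` and an even vertex `u` whose
weight is, once that of `v` has been lowered, at least that of `v`: modulo `x_v` the condition on
the edge `{u, w}` is implied by that on `{v, w}`. The exponent `a = witness n k t` (this is where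
`t ≥ k` enters) turns `J ^ t` into the cover ideal of a matching of `2k` edges, namely the edges
joining an odd vertex to its neighbour away from the middle of the path. By Mayer–Vietoris the
quotient by this ideal has depth less than `2k + 1` (`not_EV_match`).
-/

open MvPolynomial

/-- The cover ideal `J(G) = ⋂_{{u,v} ∈ E(G)} (x_u, x_v)` of a graph `G` on `{1,…,n}`,
inside `R = K[x_1,…,x_n]`. -/
noncomputable def coverIdeal (K : Type*) [Field K] {n : ℕ} (G : SimpleGraph (Fin n)) :
    Ideal (MvPolynomial (Fin n) K) :=
  ⨅ (u : Fin n) (v : Fin n) (_ : G.Adj u v), Ideal.span {X u, X v}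

/-- The maximal homogeneous ideal `(x_1,…,x_n)` of `K[x_1,…,x_n]`. -/
noncomputable def maxIdeal (K : Type*) [Field K] (n : ℕ) : Ideal (MvPolynomial (Fin n) K) :=
  Ideal.span (Set.range (X : Fin n → MvPolynomial (Fin n) K))

/-- `depth(R/I)` with respect to the maximal homogeneous ideal: the supremum of the
lengths of `R/I`-regular sequences consisting of elements of `(x_1,…,x_n)`. -/
noncomputable def depthQuot (K : Type*) [Field K] (n : ℕ)
    (I : Ideal (MvPolynomial (Fin n) K)) : ℕ :=
  sSup {d : ℕ | ∃ rs : List (MvPolynomial (Fin n) K), rs.length = d ∧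
    (∀ r ∈ rs, r ∈ maxIdeal K n) ∧
    RingTheory.Sequence.IsRegular ((MvPolynomial (Fin n) K) ⧸ I) rs}

/-! ### Depth and vanishing of Ext -/

section DepthLemma

open CategoryTheory Abelian

universe u

variable {R : Type u} [CommRing R] {N A B C : Type u} [AddCommGroup N] [Module R N]
  [AddCommGroup A] [Module R A] [AddCommGroup B] [Module R B] [AddCommGroup C] [Module R C]

/-- `Ext^i_R(N, M) = 0` for all `i < d`. -/
def ExtVanish (R : Type u) [CommRing R] (N : Type u) [AddCommGroup N] [Module R N] (d : ℕ)
    (M : Type u) [AddCommGroup M] [Module R M] : Prop :=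
  ∀ i < d, Subsingleton (Ext (ModuleCat.of R N) (ModuleCat.of R M) i)

lemma ExtVanish.mono {d e : ℕ} (h : ExtVanish R N e A) (hde : d ≤ e) : ExtVanish R N d A :=
  fun i hi => h i (hi.trans_le hde)

lemma extVanish_of_subsingleton [Subsingleton A] (d : ℕ) : ExtVanish R N d A := by
  intro i _
  have h0 : Limits.IsZero (ModuleCat.of R A) := ModuleCat.isZero_of_subsingleton _
  refine ⟨fun x y => ?_⟩
  rw [← Ext.comp_mk₀_id x, ← Ext.comp_mk₀_id y, h0.eq_of_src (𝟙 _) 0]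
  simp

/-- The short complex of modules attached to an exact pair of linear maps. -/
def scOf (f : A →ₗ[R] B) (g : B →ₗ[R] C) (h : Function.Exact f g) :
    ShortComplex (ModuleCat.{u} R) :=
  ModuleCat.shortComplexOfCompEqZero f g h.linearMap_comp_eq_zero

lemma scOf_shortExact (f : A →ₗ[R] B) (g : B →ₗ[R] C) (hf : Function.Injective f)
    (hg : Function.Surjective g) (h : Function.Exact f g) : (scOf f g h).ShortExact where
  exact := ModuleCat.shortComplex_exact _ h
  mono_f := by simpa [scOf, ModuleCat.mono_iff_injective] using hf
  epi_g := by simpa [scOf, ModuleCat.epi_iff_surjective] using hg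

section ShortExact

variable {S : ShortComplex (ModuleCat.{u} R)}

lemma ext_mid (hS : S.ShortExact) (X : ModuleCat.{u} R) (i : ℕ)
    (h₁ : Subsingleton (Ext X S.X₁ i)) (h₃ : Subsingleton (Ext X S.X₃ i)) :
    Subsingleton (Ext X S.X₂ i) := by
  refine subsingleton_of_forall_eq 0 fun x => ?_
  obtain ⟨y, hy⟩ := Ext.covariant_sequence_exact₂ X hS x (Subsingleton.elim _ _)
  rw [← hy, Subsingleton.elim y 0, Ext.zero_comp]

lemma ext_left_zero (hS : S.ShortExact) (X : ModuleCat.{u} R)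
    (h : ∀ x : Ext X S.X₁ 0, x.comp (Ext.mk₀ S.f) (add_zero 0) = 0) :
    Subsingleton (Ext X S.X₁ 0) := by
  have := hS.mono_f
  refine subsingleton_of_forall_eq 0 fun x => ?_
  refine Ext.postcomp_mk₀_injective_of_mono X S.f ?_
  exact (h x).trans (h 0).symm

lemma ext_left_succ (hS : S.ShortExact) (X : ModuleCat.{u} R) (i : ℕ)
    (h : ∀ x : Ext X S.X₁ (i + 1), x.comp (Ext.mk₀ S.f) (add_zero (i + 1)) = 0)
    (h₃ : Subsingleton (Ext X S.X₃ i)) : Subsingleton (Ext X S.X₁ (i + 1)) := by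
  refine subsingleton_of_forall_eq 0 fun x => ?_
  obtain ⟨y, hy⟩ := Ext.covariant_sequence_exact₁ X hS x (h x) rfl
  rw [← hy, Subsingleton.elim y 0, Ext.zero_comp]

lemma ext_right (hS : S.ShortExact) (X : ModuleCat.{u} R) (i : ℕ) (h₁ : Subsingleton (Ext X S.X₁ (i + 1)))
    (h₂ : Subsingleton (Ext X S.X₂ i)) : Subsingleton (Ext X S.X₃ i) := by
  refine subsingleton_of_forall_eq 0 fun x => ?_
  obtain ⟨y, hy⟩ := Ext.covariant_sequence_exact₃ X hS x rfl (Subsingleton.elim _ _)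
  rw [← hy, Subsingleton.elim y 0, Ext.zero_comp]

end ShortExact

lemma ExtVanish.mid (f : A →ₗ[R] B) (g : B →ₗ[R] C) (hf : Function.Injective f)
    (hg : Function.Surjective g) (h : Function.Exact f g) {d : ℕ}
    (hA : ExtVanish R N d A) (hC : ExtVanish R N d C) : ExtVanish R N d B :=
  fun i hi => ext_mid (scOf_shortExact f g hf hg h) _ i (hA i hi) (hC i hi)

lemma ExtVanish.left (f : A →ₗ[R] B) (g : B →ₗ[R] C) (hf : Function.Injective f)
    (hg : Function.Surjective g) (h : Function.Exact f g) {d : ℕ}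
    (hB : ExtVanish R N (d + 1) B) (hC : ExtVanish R N d C) : ExtVanish R N (d + 1) A := by
  intro i hi
  have hS := scOf_shortExact f g hf hg h
  have hBi : Subsingleton (Ext (ModuleCat.of R N) (scOf f g h).X₂ i) := hB i hi
  rcases i with _ | i
  · exact ext_left_zero hS _ fun x => Subsingleton.elim _ _
  · exact ext_left_succ hS _ i (fun x => Subsingleton.elim _ _) (hC i (by omega))

lemma ExtVanish.right (f : A →ₗ[R] B) (g : B →ₗ[R] C) (hf : Function.Injective f)
    (hg : Function.Surjective g) (h : Function.Exact f g) {d : ℕ}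
    (hA : ExtVanish R N (d + 1) A) (hB : ExtVanish R N d B) : ExtVanish R N d C :=
  fun i hi => ext_right (scOf_shortExact f g hf hg h) _ i (hA (i + 1) (by omega)) (hB i hi)

lemma ExtVanish.prod {d : ℕ} (hA : ExtVanish R N d A) (hB : ExtVanish R N d B) :
    ExtVanish R N d (A × B) :=
  ExtVanish.mid (LinearMap.inl R A B) (LinearMap.snd R A B) LinearMap.inl_injective
    LinearMap.snd_surjective .inl_snd hA hB

/-- If `r` is a nonzerodivisor on `A` which annihilates `N`, and `C = A ⧸ r A`, then the vanishing
range of `A` exceeds that of `C` by one. -/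
lemma ExtVanish.succ_of_smul (r : R) (hr : r ∈ Module.annihilator R N)
    (g : A →ₗ[R] C) (hf : Function.Injective (LinearMap.lsmul R A r))
    (hg : Function.Surjective g) (h : Function.Exact (LinearMap.lsmul R A r) g) {d : ℕ}
    (hC : ExtVanish R N d C) : ExtVanish R N (d + 1) A := by
  intro i hi
  have hS := scOf_shortExact _ g hf hg h
  -- multiplication by `r` on `Ext(N, A)` is zero because `r` kills `N`
  have hx : ∀ x : Ext (ModuleCat.of R N) (scOf _ g h).X₁ i,
      x.comp (Ext.mk₀ (scOf _ g h).f) (add_zero i) = 0 := by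
    intro x
    have := Ext.postcomp_smul_id_eq_zero_of_mem_annihilator (M := ModuleCat.of R A)
      (N := ModuleCat.of R N) hr i
    exact congrArg (fun φ => φ.hom x) this
  rcases i with _ | i
  · exact ext_left_zero hS _ hx
  · exact ext_left_succ hS _ i hx (hC i (by omega))

lemma not_extVanish_self [Nontrivial N] : ¬ ExtVanish R N 1 N := by
  intro h
  have := h 0 one_pos
  have h2 : Subsingleton (ModuleCat.of R N ⟶ ModuleCat.of R N) :=
    (Ext.addEquiv₀ (X := ModuleCat.of R N) (Y := ModuleCat.of R N)).toEquiv.symm.subsingleton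
  have h3 : (ModuleCat.ofHom (LinearMap.id : N →ₗ[R] N)) = ModuleCat.ofHom 0 :=
    Subsingleton.elim _ _
  obtain ⟨x, hx⟩ := exists_ne (0 : N)
  exact hx (LinearMap.congr_fun (congrArg ModuleCat.Hom.hom h3) x)

/-- Rees' theorem for a cyclic module `R ⧸ I` and an ideal `m ⊇ I`. -/
lemma exists_isRegular_iff_extVanish [IsNoetherianRing R] {m I : Ideal R} (hm : m ≠ ⊤)
    (hI : I ≤ m) (d : ℕ) :
    (∃ rs : List R, rs.length = d ∧ (∀ r ∈ rs, r ∈ m) ∧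
      RingTheory.Sequence.IsRegular (R ⧸ I) rs) ↔ ExtVanish R (R ⧸ m) d (R ⧸ I) := by
  have hlt : m • (⊤ : Submodule R (R ⧸ I)) < ⊤ := by
    refine lt_top_iff_ne_top.mpr fun h => hm ?_
    have h2 := congrArg (Submodule.comap (Submodule.mkQ I)) h
    rw [Submodule.comap_smul_top_of_surjective m _ (Submodule.mkQ_surjective _)] at h2
    simpa [hI] using h2
  have hsupp : Module.support R (R ⧸ m) = PrimeSpectrum.zeroLocus m := by
    rw [Module.support_eq_zeroLocus, Ideal.annihilator_quotient]
  constructor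
  · rintro ⟨rs, rfl, hrs, hreg⟩
    exact ModuleCat.subsingleton_ext_of_exists_isRegular m (ModuleCat.of R (R ⧸ m)) hsupp.subset
      (ModuleCat.of R (R ⧸ I)) hlt rs hrs hreg
  · intro h
    exact ModuleCat.exists_isRegular_of_exists_subsingleton_ext m d (ModuleCat.of R (R ⧸ I)) hlt
      (ModuleCat.of R (R ⧸ m)) hsupp h

end DepthLemma

/-! ### The colon sequence and the Mayer–Vietoris sequence -/

section Quotients

universe u

variable {R : Type u} [CommRing R] {N : Type u} [AddCommGroup N] [Module R N]

/-- Multiplication by `x` as a map `R ⧸ I' → R ⧸ I`; the hypothesis says `I' = (I : x)`. -/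
noncomputable def mulQuot (x : R) (I' I : Ideal R) (h : ∀ f, x * f ∈ I ↔ f ∈ I') :
    (R ⧸ I') →ₗ[R] (R ⧸ I) :=
  Submodule.mapQ I' I (LinearMap.lsmul R R x) fun f hf => (h f).2 hf

lemma mulQuot_injective (x : R) (I' I : Ideal R) (h : ∀ f, x * f ∈ I ↔ f ∈ I') :
    Function.Injective (mulQuot x I' I h) := by
  rw [injective_iff_map_eq_zero]
  intro a
  obtain ⟨f, rfl⟩ := Submodule.Quotient.mk_surjective I' a
  intro ha
  have : x * f ∈ I := (Submodule.Quotient.mk_eq_zero I).1 ha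
  exact (Submodule.Quotient.mk_eq_zero I').2 ((h f).1 this)

/-- The colon sequence `0 → R ⧸ (I : x) → R ⧸ I → R ⧸ (I + (x)) → 0`, with `I' = (I : x)`. -/
lemma mulQuot_exact (x : R) (I' I J : Ideal R) (h : ∀ f, x * f ∈ I ↔ f ∈ I')
    (hJ : J = I ⊔ Ideal.span {x}) (hIJ : I ≤ J) :
    Function.Exact (mulQuot x I' I h) (Submodule.factor hIJ) := by
  intro b
  obtain ⟨f, rfl⟩ := Submodule.Quotient.mk_surjective I b
  constructor
  · intro hb
    have hf : f ∈ J := (Submodule.Quotient.mk_eq_zero J).1 hb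
    rw [hJ, Submodule.mem_sup] at hf
    obtain ⟨y, hy, z, hz, rfl⟩ := hf
    obtain ⟨g, rfl⟩ := Ideal.mem_span_singleton'.1 hz
    refine ⟨Submodule.Quotient.mk g, ?_⟩
    refine (Submodule.Quotient.eq I).2 ?_
    have : x * g - (y + g * x) = -y := by ring
    simpa [this] using hy
  · rintro ⟨a, ha⟩
    obtain ⟨g, rfl⟩ := Submodule.Quotient.mk_surjective I' a
    rw [← ha]
    refine (Submodule.Quotient.mk_eq_zero J).2 ?_
    rw [hJ]
    exact Ideal.mul_mem_right _ _ (Ideal.mem_sup_right (Ideal.mem_span_singleton_self x))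

/-- The Mayer–Vietoris sequence of two ideals. -/
lemma extVanish_sup {A B : Ideal R} {d : ℕ} (hAB : ExtVanish R N (d + 1) (R ⧸ (A ⊓ B)))
    (hA : ExtVanish R N d (R ⧸ A)) (hB : ExtVanish R N d (R ⧸ B)) :
    ExtVanish R N d (R ⧸ (A ⊔ B)) := by
  let f : (R ⧸ (A ⊓ B)) →ₗ[R] (R ⧸ A) × (R ⧸ B) :=
    (Submodule.factor inf_le_left).prod (Submodule.factor inf_le_right)
  let g : (R ⧸ A) × (R ⧸ B) →ₗ[R] (R ⧸ (A ⊔ B)) :=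
    (Submodule.factor le_sup_left).coprod (-(Submodule.factor le_sup_right))
  refine ExtVanish.right f g ?_ ?_ ?_ hAB (hA.prod hB)
  · rw [injective_iff_map_eq_zero]
    intro a
    obtain ⟨x, rfl⟩ := Submodule.Quotient.mk_surjective _ a
    intro hx
    have h1 : x ∈ A := (Submodule.Quotient.mk_eq_zero A).1 (congrArg Prod.fst hx)
    have h2 : x ∈ B := (Submodule.Quotient.mk_eq_zero B).1 (congrArg Prod.snd hx)
    exact (Submodule.Quotient.mk_eq_zero _).2 ⟨h1, h2⟩
  · intro c
    obtain ⟨a, rfl⟩ := Submodule.factor_surjective (le_sup_left : A ≤ A ⊔ B) c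
    exact ⟨(a, 0), by simp [g]⟩
  · rintro ⟨a, b⟩
    obtain ⟨x, rfl⟩ := Submodule.Quotient.mk_surjective _ a
    obtain ⟨y, rfl⟩ := Submodule.Quotient.mk_surjective _ b
    constructor
    · intro h
      have h' : Submodule.Quotient.mk (p := A ⊔ B) x + -Submodule.Quotient.mk y = 0 := h
      have : x - y ∈ A ⊔ B := by
        rw [← Submodule.Quotient.mk_eq_zero]
        simpa [sub_eq_add_neg] using h'
      obtain ⟨p, hp, q, hq, hpq⟩ := Submodule.mem_sup.1 this
      refine ⟨Submodule.Quotient.mk (x - p), Prod.ext ?_ ?_⟩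
      · refine (Submodule.Quotient.eq A).2 ?_
        simpa using hp
      · refine (Submodule.Quotient.eq B).2 ?_
        have : x - p - y = q := by linear_combination -hpq
        simpa [this] using hq
    · rintro ⟨z, hz⟩
      obtain ⟨z, rfl⟩ := Submodule.Quotient.mk_surjective _ z
      rw [← hz]
      change Submodule.Quotient.mk (p := A ⊔ B) z + -Submodule.Quotient.mk z = 0
      simp

end Quotients

/-! ### Monomial ideals given by weights on pairs of variables -/

section Monomial

universe u

variable (K : Type u) [Field K] {n : ℕ}

/-- The monomial ideal spanned by the monomials with exponents in `U`. -/
noncomputable def monIdeal (U : Set (Fin n →₀ ℕ)) : Ideal (MvPolynomial (Fin n) K) :=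
  Ideal.span ((fun s => monomial s (1 : K)) '' U)

/-- `Ext^i(R ⧸ m, R ⧸ I) = 0` for all `i < d`, where `m` is the ideal of all variables and `I` is
the monomial ideal attached to `U`. -/
def EV (d : ℕ) (U : Set (Fin n →₀ ℕ)) : Prop :=
  ExtVanish (MvPolynomial (Fin n) K) (MvPolynomial (Fin n) K ⧸ maxIdeal K n) d
    (MvPolynomial (Fin n) K ⧸ monIdeal K U)

variable {K}

lemma mem_monIdeal {U : Set (Fin n →₀ ℕ)} (hU : IsUpperSet U) (f : MvPolynomial (Fin n) K) :
    f ∈ monIdeal K U ↔ ∀ b ∈ f.support, b ∈ U := by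
  rw [monIdeal, mem_ideal_span_monomial_image]
  exact forall₂_congr fun b _ => ⟨fun ⟨s, hs, hsb⟩ => hU hsb hs, fun h => ⟨b, h, le_rfl⟩⟩

lemma monomial_mem_monIdeal {U : Set (Fin n →₀ ℕ)} {b : Fin n →₀ ℕ} (hb : b ∈ U) :
    monomial b (1 : K) ∈ monIdeal K U :=
  Ideal.subset_span ⟨b, hb, rfl⟩

lemma monIdeal_union (U U' : Set (Fin n →₀ ℕ)) :
    monIdeal K (U ∪ U') = monIdeal K U ⊔ monIdeal K U' := by
  rw [monIdeal, Set.image_union, Ideal.span_union]; rfl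

lemma monIdeal_inter {U U' : Set (Fin n →₀ ℕ)} (hU : IsUpperSet U) (hU' : IsUpperSet U') :
    monIdeal K (U ∩ U') = monIdeal K U ⊓ monIdeal K U' := by
  ext f
  rw [Ideal.mem_inf, mem_monIdeal (hU.inter hU'), mem_monIdeal hU, mem_monIdeal hU']
  exact ⟨fun h => ⟨fun b hb => (h b hb).1, fun b hb => (h b hb).2⟩,
    fun h b hb => ⟨h.1 b hb, h.2 b hb⟩⟩

/-- Exponents of the monomials in the prime ideal generated by the variables in `V`. -/
def varSet (V : Finset (Fin n)) : Set (Fin n →₀ ℕ) := {b | ∃ v ∈ V, 0 < b v}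

lemma isUpperSet_varSet (V : Finset (Fin n)) : IsUpperSet (varSet V) :=
  fun _ _ hab ⟨v, hv, h⟩ => ⟨v, hv, h.trans_le (hab v)⟩

lemma monIdeal_varSet (V : Finset (Fin n)) :
    monIdeal K (varSet V) = Ideal.span (X '' (V : Set (Fin n))) := by
  ext f
  rw [mem_monIdeal (isUpperSet_varSet V), mem_ideal_span_X_image]
  simp [varSet, Nat.pos_iff_ne_zero]

lemma X_mul_mem_monIdeal {U U' : Set (Fin n →₀ ℕ)} (hU : IsUpperSet U) (hU' : IsUpperSet U')
    (v : Fin n) (h : ∀ b, b + Finsupp.single v 1 ∈ U ↔ b ∈ U') (f : MvPolynomial (Fin n) K) :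
    X v * f ∈ monIdeal K U ↔ f ∈ monIdeal K U' := by
  rw [mem_monIdeal hU, mem_monIdeal hU', support_X_mul]
  simp [← h, add_comm]

/-- Exponents `b` that involve a variable in `V` or satisfy `c u w ≤ b u + b w` for all
`u`, `w`. If `c` vanishes on the diagonal, these are the exponents of the monomials in
`(x_v : v ∈ V) + ⋂ (x_u, x_w) ^ c u w`. -/
def wSet (V : Finset (Fin n)) (c : Fin n → Fin n → ℕ) : Set (Fin n →₀ ℕ) :=
  {b | (∃ v ∈ V, 0 < b v) ∨ ∀ u w, c u w ≤ b u + b w}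

lemma isUpperSet_wSet (V : Finset (Fin n)) (c : Fin n → Fin n → ℕ) : IsUpperSet (wSet V c) := by
  rintro a b hab (⟨v, hv, h⟩ | h)
  · exact Or.inl ⟨v, hv, h.trans_le (hab v)⟩
  · exact Or.inr fun u w => (h u w).trans (add_le_add (hab u) (hab w))

/-- The weights describing the colon ideal by `x_v`, for `v ∉ V`. -/
def decAt (v : Fin n) (c : Fin n → Fin n → ℕ) (u w : Fin n) : ℕ :=
  c u w - ((if u = v then 1 else 0) + (if w = v then 1 else 0))

lemma add_single_mem_wSet {V : Finset (Fin n)} {v : Fin n} (hv : v ∉ V)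
    (c : Fin n → Fin n → ℕ) (b : Fin n →₀ ℕ) :
    b + Finsupp.single v 1 ∈ wSet V c ↔ b ∈ wSet V (decAt v c) := by
  have key : ∀ u, (b + Finsupp.single v (1 : ℕ) : Fin n →₀ ℕ) u = b u + if u = v then 1 else 0 := by
    intro u
    simp [Finsupp.single_apply, eq_comm]
  refine or_congr ?_ ?_
  · refine exists_congr fun u => and_congr_right fun hu => ?_
    have : u ≠ v := fun h => hv (h ▸ hu)
    simp [key, this]
  · refine forall₂_congr fun u w => ?_
    rw [key, key, decAt]
    omega

lemma wSet_insert (V : Finset (Fin n)) (v : Fin n) (c : Fin n → Fin n → ℕ) :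
    wSet (insert v V) c = wSet V c ∪ varSet {v} := by
  ext b
  simp only [wSet, varSet, Set.mem_union, Set.mem_ofPred_eq, Finset.mem_insert,
    Finset.mem_singleton, exists_eq_left, or_and_right, exists_or]
  rw [or_assoc, or_comm]

lemma monIdeal_wSet_insert (V : Finset (Fin n)) (v : Fin n) (c : Fin n → Fin n → ℕ) :
    monIdeal K (wSet (insert v V) c) = monIdeal K (wSet V c) ⊔ Ideal.span {X v} := by
  rw [wSet_insert, monIdeal_union, monIdeal_varSet]; simp

lemma EV.mono {d e : ℕ} {U : Set (Fin n →₀ ℕ)} (h : EV K e U) (hde : d ≤ e) : EV K d U :=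
  ExtVanish.mono h hde

lemma EV.colon_mid {d : ℕ} {V : Finset (Fin n)} {v : Fin n} (hv : v ∉ V)
    {c : Fin n → Fin n → ℕ} (h₁ : EV K d (wSet V (decAt v c)))
    (h₃ : EV K d (wSet (insert v V) c)) : EV K d (wSet V c) := by
  have hx := X_mul_mem_monIdeal (K := K) (isUpperSet_wSet V c) (isUpperSet_wSet V (decAt v c)) v
    (add_single_mem_wSet hv c)
  have hJ := monIdeal_wSet_insert (K := K) V v c
  exact ExtVanish.mid _ _ (mulQuot_injective (X v) _ _ hx)
    (Submodule.factor_surjective (hJ ▸ le_sup_left)) (mulQuot_exact _ _ _ _ hx hJ _) h₁ h₃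

lemma EV.colon_left {d : ℕ} {V : Finset (Fin n)} {v : Fin n} (hv : v ∉ V)
    {c : Fin n → Fin n → ℕ} (h₂ : EV K (d + 1) (wSet V c))
    (h₃ : EV K d (wSet (insert v V) c)) : EV K (d + 1) (wSet V (decAt v c)) := by
  have hx := X_mul_mem_monIdeal (K := K) (isUpperSet_wSet V c) (isUpperSet_wSet V (decAt v c)) v
    (add_single_mem_wSet hv c)
  have hJ := monIdeal_wSet_insert (K := K) V v c
  exact ExtVanish.left _ _ (mulQuot_injective (X v) _ _ hx)
    (Submodule.factor_surjective (hJ ▸ le_sup_left)) (mulQuot_exact _ _ _ _ hx hJ _) h₂ h₃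

lemma EV.union {d : ℕ} {U U' : Set (Fin n →₀ ℕ)} (hU : IsUpperSet U) (hU' : IsUpperSet U')
    (h : EV K (d + 1) (U ∩ U')) (h₁ : EV K d U) (h₂ : EV K d U') : EV K d (U ∪ U') := by
  unfold EV at *
  rw [monIdeal_inter hU hU'] at h
  rw [monIdeal_union]
  exact extVanish_sup h h₁ h₂

section VarSet

variable {V : Finset (Fin n)} {w : Fin n}

lemma X_mul_mem_varSet (hw : w ∉ V) (f : MvPolynomial (Fin n) K) :
    X w * f ∈ monIdeal K (varSet V) ↔ f ∈ monIdeal K (varSet V) := by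
  refine X_mul_mem_monIdeal (isUpperSet_varSet V) (isUpperSet_varSet V) w (fun b => ?_) f
  refine exists_congr fun u => and_congr_right fun hu => ?_
  have : u ≠ w := fun h => hw (h ▸ hu)
  simp [this]

lemma monIdeal_varSet_insert (V : Finset (Fin n)) (w : Fin n) :
    monIdeal K (varSet (insert w V)) = monIdeal K (varSet V) ⊔ Ideal.span {X w} := by
  simp only [monIdeal_varSet, Finset.coe_insert, Set.image_insert_eq]
  rw [Ideal.span_insert, sup_comm]

lemma mulQuot_self_eq {R : Type u} [CommRing R] (x : R) (I : Ideal R)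
    (h : ∀ f, x * f ∈ I ↔ f ∈ I) : mulQuot x I I h = LinearMap.lsmul R (R ⧸ I) x := by
  refine LinearMap.ext fun a => ?_
  obtain ⟨f, rfl⟩ := Submodule.Quotient.mk_surjective I a
  rfl

lemma EV.varSet_succ {d : ℕ} (hw : w ∉ V) (h : EV K d (varSet (insert w V))) :
    EV K (d + 1) (varSet V) := by
  have hx := X_mul_mem_varSet (K := K) hw
  have hJ := monIdeal_varSet_insert (K := K) V w
  have e := mulQuot_self_eq _ _ hx
  refine ExtVanish.succ_of_smul (X w) ?_ (Submodule.factor (hJ ▸ le_sup_left))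
    (e ▸ mulQuot_injective _ _ _ hx)
    (Submodule.factor_surjective _) (e ▸ mulQuot_exact _ _ _ _ hx hJ _) h
  rw [Ideal.annihilator_quotient]
  exact Ideal.subset_span ⟨w, rfl⟩

lemma EV.varSet_insert {d : ℕ} (hw : w ∉ V) (h : EV K (d + 1) (varSet V)) :
    EV K d (varSet (insert w V)) := by
  have hx := X_mul_mem_varSet (K := K) hw
  have hJ := monIdeal_varSet_insert (K := K) V w
  exact ExtVanish.right _ _ (mulQuot_injective _ _ _ hx)
    (Submodule.factor_surjective (hJ ▸ le_sup_left)) (mulQuot_exact _ _ _ _ hx hJ _) h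
    (ExtVanish.mono h (Nat.le_succ d))

lemma exists_notMem_of_card_lt (h : V.card < n) : ∃ w, w ∉ V := by
  by_contra! hV
  have : V = Finset.univ := Finset.eq_univ_iff_forall.2 hV
  simp [this] at h

/-- The quotient by the variables in `V` is a polynomial ring in the `m` remaining variables, and
has depth at least `m`. -/
lemma EV_varSet : ∀ (m : ℕ) (V : Finset (Fin n)), V.card + m = n → EV K m (varSet V)
  | 0, _, _ => fun i hi => absurd hi (Nat.not_lt_zero i)
  | m + 1, V, h => by
    obtain ⟨w, hw⟩ := exists_notMem_of_card_lt (V := V) (by omega)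
    refine EV.varSet_succ hw (EV_varSet m _ ?_)
    rw [Finset.card_insert_of_notMem hw]; omega

lemma maxIdeal_eq (K : Type u) [Field K] (n : ℕ) :
    maxIdeal K n = monIdeal K (varSet Finset.univ) := by
  rw [monIdeal_varSet, maxIdeal]; simp

lemma maxIdeal_ne_top (K : Type u) [Field K] (n : ℕ) : maxIdeal K n ≠ ⊤ := by
  rw [maxIdeal_eq, Ne, Ideal.eq_top_iff_one, mem_monIdeal (isUpperSet_varSet _)]
  intro h
  obtain ⟨v, -, hv⟩ := h 0 (by simp)
  simp at hv

/-- The quotient by the variables in `V` has depth at most the number `m` of remaining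
variables. -/
lemma not_EV_varSet : ∀ (m : ℕ) (V : Finset (Fin n)), V.card + m = n → ¬ EV K (m + 1) (varSet V)
  | 0, V, h => by
    have hV : V = Finset.univ := Finset.eq_univ_of_card _ (by simpa using h)
    have := Ideal.Quotient.nontrivial_iff.2 (maxIdeal_ne_top K n)
    rw [hV, EV, ← maxIdeal_eq]
    exact not_extVanish_self
  | m + 1, V, h => by
    obtain ⟨w, hw⟩ := exists_notMem_of_card_lt (V := V) (by omega)
    refine fun hE => not_EV_varSet m (insert w V) ?_ (hE.varSet_insert hw)
    rw [Finset.card_insert_of_notMem hw]; omega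

end VarSet

lemma EV_univ (d : ℕ) : EV K d (Set.univ : Set (Fin n →₀ ℕ)) := by
  have : monIdeal K (Set.univ : Set (Fin n →₀ ℕ)) = ⊤ := by
    rw [Ideal.eq_top_iff_one, mem_monIdeal isUpperSet_univ]; simp
  have : Subsingleton (MvPolynomial (Fin n) K ⧸ monIdeal K (Set.univ : Set (Fin n →₀ ℕ))) :=
    Ideal.Quotient.subsingleton_iff.2 this
  exact extVanish_of_subsingleton d

lemma wSet_eq_varSet {V : Finset (Fin n)} {c : Fin n → Fin n → ℕ} {u w : Fin n}
    (hc : c u w ≠ 0) (hu : u ∈ V) (hw : w ∈ V) : wSet V c = varSet V := by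
  ext b
  refine ⟨?_, Or.inl⟩
  rintro (h | h)
  · exact h
  · have := h u w
    rcases Nat.eq_zero_or_pos (b u) with h0 | h0
    · exact ⟨w, hw, by omega⟩
    · exact ⟨u, hu, h0⟩

lemma sum_decAt_le (v : Fin n) (c : Fin n → Fin n → ℕ) :
    ∑ p : Fin n × Fin n, decAt v c p.1 p.2 ≤ ∑ p : Fin n × Fin n, c p.1 p.2 :=
  Finset.sum_le_sum fun _ _ => Nat.sub_le _ _

lemma sum_decAt_lt {v u w : Fin n} {c : Fin n → Fin n → ℕ} (hc : c u w ≠ 0)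
    (h : u = v ∨ w = v) :
    ∑ p : Fin n × Fin n, decAt v c p.1 p.2 < ∑ p : Fin n × Fin n, c p.1 p.2 := by
  refine Finset.sum_lt_sum (fun _ _ => Nat.sub_le _ _) ⟨(u, w), Finset.mem_univ _, ?_⟩
  simp only [decAt]
  rcases h with rfl | rfl <;> simp only [if_true] <;> split_ifs <;> omega

/-- If `C ∪ V` meets every pair with positive weight, then the ideal attached to `(V, c)` has
depth at least `n - |V| - |C| - 1`. -/
lemma EV_wSet_of_cover (d : ℕ) : ∀ (N : ℕ) (V C : Finset (Fin n)) (c : Fin n → Fin n → ℕ),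
    C.card + ∑ p : Fin n × Fin n, c p.1 p.2 = N → Disjoint C V →
    (∀ u w, c u w ≠ 0 → u ∈ C ∪ V ∨ w ∈ C ∪ V) → d + V.card + C.card + 1 ≤ n →
    EV K d (wSet V c) := by
  intro N
  induction N using Nat.strong_induction_on with
  | _ N ih =>
  intro V C c hN hCV hc hd
  rcases C.eq_empty_or_nonempty with rfl | ⟨v, hv⟩
  · simp only [Finset.empty_union, Finset.card_empty] at hc hd hN
    by_cases h0 : ∀ u w, c u w = 0
    · have : wSet V c = Set.univ := Set.eq_univ_of_forall fun b => Or.inr fun u w => by simp [h0]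
      rw [this]
      exact EV_univ d
    · push Not at h0
      obtain ⟨u, w, huw⟩ := h0
      -- the colon step at the endpoint `x ∉ V` of a weighted pair
      have step : ∀ x, x ∉ V → (u = x ∨ w = x) → u ∈ insert x V → w ∈ insert x V →
          EV K d (wSet V c) := by
        intro x hx hux hu hw
        refine EV.colon_mid hx ?_ ?_
        · refine ih _ ?_ V ∅ _ rfl hCV ?_ (by simpa using hd)
          · have := sum_decAt_lt huw hux
            simp only [Finset.card_empty]
            omega
          · intro a b hab
            have h' : c a b ≠ 0 := fun h => by simp [decAt, h] at hab
            simpa using hc a b h'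
        · rw [wSet_eq_varSet huw hu hw]
          refine (EV_varSet (n - V.card - 1) _ ?_).mono (by omega)
          rw [Finset.card_insert_of_notMem hx]
          omega
      by_cases hu : u ∈ V
      · by_cases hw : w ∈ V
        · rw [wSet_eq_varSet huw hu hw]
          exact (EV_varSet (n - V.card) _ (by omega)).mono (by omega)
        · exact step w hw (Or.inr rfl) (by simp [hu]) (by simp)
      · have hw := (hc u w huw).resolve_left hu
        exact step u hu (Or.inl rfl) (by simp) (by simp [hw])
  · have hcard := Finset.card_erase_add_one hv
    have hvV : v ∉ V := Finset.disjoint_left.1 hCV hv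
    by_cases h0 : ∃ u w, c u w ≠ 0 ∧ (u = v ∨ w = v)
    · obtain ⟨u, w, huw, hu⟩ := h0
      refine EV.colon_mid hvV ?_ ?_
      · refine ih _ ?_ V C _ rfl hCV ?_ hd
        · have := sum_decAt_lt huw hu
          omega
        · intro a b hab
          refine hc a b ?_
          intro h
          simp [decAt, h] at hab
      · refine ih _ ?_ _ (C.erase v) c rfl ?_ ?_ ?_
        · omega
        · rw [Finset.disjoint_insert_right]
          exact ⟨Finset.notMem_erase v C, hCV.mono_left (Finset.erase_subset v C)⟩
        · intro a b hab
          have := hc a b hab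
          simp only [Finset.mem_union, Finset.mem_erase, Finset.mem_insert] at this ⊢
          tauto
        · rw [Finset.card_insert_of_notMem hvV]
          omega
    · push Not at h0
      refine ih _ ?_ V (C.erase v) c rfl (hCV.mono_left (Finset.erase_subset v C)) ?_ (by omega)
      · omega
      · intro a b hab
        have := hc a b hab
        have := h0 a b hab
        simp only [Finset.mem_union, Finset.mem_erase] at *
        tauto

end Monomial

/-! ### Powers of the cover ideal of a path -/

section Path

universe u

variable {K : Type u} [Field K] {n : ℕ}

/-- Weights along the path: the edge `{u, u + 1}` gets the weight `t - a u - a (u + 1)`. -/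
def pathWt (t : ℕ) (a : Fin n → ℕ) (u w : Fin n) : ℕ :=
  if u.val + 1 = w.val then t - a u - a w else 0

lemma mem_wSet_path {t : ℕ} {b : Fin n →₀ ℕ} :
    b ∈ wSet ∅ (pathWt t 0) ↔ ∀ u w : Fin n, u.val + 1 = w.val → t ≤ b u + b w := by
  simp only [wSet, pathWt, Set.mem_ofPred_eq, Finset.notMem_empty, false_and, exists_false,
    false_or, Pi.zero_apply, Nat.sub_zero]
  refine forall₂_congr fun u w => ?_
  split_ifs with h <;> simp [h]

lemma coverIdeal_path :
    coverIdeal K (SimpleGraph.pathGraph n) = monIdeal K (wSet ∅ (pathWt 1 0)) := by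
  have hpair : ∀ u v : Fin n,
      Ideal.span {(X u : MvPolynomial (Fin n) K), X v} = monIdeal K (varSet {u, v}) := by
    intro u v
    rw [monIdeal_varSet]
    simp [Set.image_insert_eq]
  ext f
  simp only [coverIdeal, Submodule.mem_iInf, hpair, mem_monIdeal (isUpperSet_varSet _),
    mem_monIdeal (isUpperSet_wSet _ _), mem_wSet_path, SimpleGraph.pathGraph_adj]
  simp only [varSet, Finset.mem_insert, Finset.mem_singleton, Set.mem_ofPred_eq, exists_eq_or_imp,
    exists_eq_left]
  constructor
  · intro h b hb u w huw
    have := h u w (Or.inl huw) b hb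
    omega
  · rintro h u w (huw | huw) b hb
    · have := h b hb u w huw
      omega
    · have := h b hb w u huw
      omega

/-- The powers of the cover ideal of a path are the intersections of the powers of its components,
since the path is bipartite. -/
lemma coverIdeal_path_pow (t : ℕ) :
    coverIdeal K (SimpleGraph.pathGraph n) ^ t = monIdeal K (wSet ∅ (pathWt t 0)) := by
  induction t with
  | zero =>
    rw [pow_zero, Ideal.one_eq_top, eq_comm, Ideal.eq_top_iff_one,
      mem_monIdeal (isUpperSet_wSet _ _)]
    intro b _
    exact mem_wSet_path.2 fun _ _ _ => Nat.zero_le _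
  | succ t ih =>
    rw [pow_succ, ih, coverIdeal_path]
    apply le_antisymm
    · rw [monIdeal, monIdeal, Ideal.span_mul_span', Ideal.span_le]
      rintro _ ⟨_, ⟨b, hb, rfl⟩, _, ⟨s, hs, rfl⟩, rfl⟩
      simp only [monomial_mul, one_mul]
      refine monomial_mem_monIdeal (mem_wSet_path.2 fun u w huw => ?_)
      have h1 := mem_wSet_path.1 hb u w huw
      have h2 := mem_wSet_path.1 hs u w huw
      simp only [Finsupp.add_apply]
      omega
    · rw [monIdeal, Ideal.span_le]
      rintro _ ⟨b, hb, rfl⟩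
      -- `s` is the indicator of a vertex cover, chosen through the bipartition
      let s : Fin n →₀ ℕ := Finsupp.equivFunOnFinite.symm fun i =>
        if (i.val % 2 = 1 ∧ 1 ≤ b i) ∨ (i.val % 2 = 0 ∧ t + 1 ≤ b i) then 1 else 0
      have hs : ∀ i, s i =
        if (i.val % 2 = 1 ∧ 1 ≤ b i) ∨ (i.val % 2 = 0 ∧ t + 1 ≤ b i) then 1 else 0 :=
        fun i => rfl
      have hsb : s ≤ b := by
        intro i
        rw [hs]
        split_ifs <;> omega
      have hprod : monomial b (1 : K) = monomial (b - s) 1 * monomial s 1 := by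
        rw [monomial_mul, one_mul, tsub_add_cancel_of_le hsb]
      change monomial b (1 : K) ∈ _
      rw [hprod]
      refine Ideal.mul_mem_mul (monomial_mem_monIdeal ?_) (monomial_mem_monIdeal ?_)
      · refine mem_wSet_path.2 fun u w huw => ?_
        have := mem_wSet_path.1 hb u w huw
        simp only [Finsupp.tsub_apply, hs]
        split_ifs <;> omega
      · refine mem_wSet_path.2 fun u w huw => ?_
        have := mem_wSet_path.1 hb u w huw
        simp only [hs]
        split_ifs <;> omega

/-! ### Cover ideals of matchings -/

/-- The weight that is `1` on the pairs `(u, f u)` with `u ∈ M` and `0` elsewhere. -/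
def matchWt (M : Finset (Fin n)) (f : Fin n → Fin n) (u w : Fin n) : ℕ :=
  if u ∈ M ∧ w = f u then 1 else 0

lemma mem_wSet_match {V M : Finset (Fin n)} {f : Fin n → Fin n} {b : Fin n →₀ ℕ} :
    b ∈ wSet V (matchWt M f) ↔ (∃ v ∈ V, 0 < b v) ∨ ∀ u ∈ M, 0 < b u ∨ 0 < b (f u) := by
  refine or_congr Iff.rfl ⟨fun h u hu => ?_, fun h u w => ?_⟩
  · have := h u (f u)
    simp only [matchWt, hu, and_self, if_true] at this
    omega
  · rw [matchWt]
    split_ifs with huw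
    · obtain ⟨hu, rfl⟩ := huw
      have := h u hu
      omega
    · exact Nat.zero_le _

/-- The cover ideal of a matching of `|M| ≥ 1` edges outside `V`, together with the variables in
`V`, gives a quotient of depth less than `n - |V| - |M|`. The Mayer–Vietoris sequence for one edge
against the others reduces the number of edges by one. -/
lemma not_EV_match (f : Fin n → Fin n) (M : Finset (Fin n)) : ∀ (V : Finset (Fin n)) (d : ℕ),
    M.Nonempty → (∀ u ∈ M, u ∉ V ∧ f u ∉ V ∧ ∀ u' ∈ M, f u ≠ u') →
    Set.InjOn f (M : Set (Fin n)) → d + V.card + M.card = n →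
    ¬ EV K d (wSet V (matchWt M f)) := by
  induction M using Finset.induction_on with
  | empty => intro V d h; simp at h
  | insert u M hu ih =>
    intro V d _ hdisj hinj hd hE
    have hu1 := hdisj u (Finset.mem_insert_self u M)
    have hfu : u ∉ insert (f u) V := by
      simp only [Finset.mem_insert, not_or]
      exact ⟨fun h => hu1.2.2 u (Finset.mem_insert_self u M) h.symm, hu1.1⟩
    have hcard : (insert u (insert (f u) V)).card = V.card + 2 := by
      rw [Finset.card_insert_of_notMem hfu, Finset.card_insert_of_notMem hu1.2.1]
    rw [Finset.card_insert_of_notMem hu] at hd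
    have hdisj' : ∀ x ∈ M, x ∉ insert u (insert (f u) V) ∧ f x ∉ insert u (insert (f u) V) ∧
        ∀ x' ∈ M, f x ≠ x' := by
      intro x hx
      have hxM := Finset.mem_insert_of_mem (b := u) hx
      have hxu : x ≠ u := fun h => hu (h ▸ hx)
      have h1 := hdisj x hxM
      refine ⟨?_, ?_, fun x' hx' => h1.2.2 x' (Finset.mem_insert_of_mem hx')⟩
      · simp only [Finset.mem_insert, not_or]
        exact ⟨hxu, fun h => hu1.2.2 x hxM h.symm, h1.1⟩
      · simp only [Finset.mem_insert, not_or]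
        refine ⟨h1.2.2 u (Finset.mem_insert_self u M), fun h => hxu ?_, h1.2.1⟩
        exact hinj (by simp [hx]) (by simp) h
    have hle : V.card + 2 + M.card ≤ n := by
      have hdis : Disjoint (insert u (insert (f u) V)) M :=
        Finset.disjoint_right.2 fun x hx => (hdisj' x hx).1
      have := Finset.card_le_univ (insert u (insert (f u) V) ∪ M)
      rw [Finset.card_union_of_disjoint hdis, hcard, Fintype.card_fin] at this
      exact this
    have hinter : wSet V (matchWt (insert u M) f) =
        varSet (insert u (insert (f u) V)) ∩ wSet V (matchWt M f) := by
      ext b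
      simp only [Set.mem_inter_iff, mem_wSet_match, varSet, Set.mem_ofPred_eq,
        Finset.exists_mem_insert, Finset.forall_mem_insert]
      have aux : ∀ p q r s : Prop, (p ∨ (q ∨ r) ∧ s) ↔ (q ∨ r ∨ p) ∧ (p ∨ s) := by tauto
      exact aux _ _ _ _
    have hunion : wSet (insert u (insert (f u) V)) (matchWt M f) =
        varSet (insert u (insert (f u) V)) ∪ wSet V (matchWt M f) := by
      ext b
      simp only [Set.mem_union, mem_wSet_match, varSet, Set.mem_ofPred_eq,
        Finset.exists_mem_insert]
      have aux : ∀ p q r s : Prop, ((p ∨ q ∨ r) ∨ s) ↔ ((p ∨ q ∨ r) ∨ r ∨ s) := by tauto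
      exact aux _ _ _ _
    obtain ⟨e, rfl⟩ : ∃ e, d = e + 1 := ⟨d - 1, by omega⟩
    rcases M.eq_empty_or_nonempty with rfl | hM
    · have : wSet V (matchWt (∅ : Finset (Fin n)) f) = Set.univ :=
        Set.eq_univ_of_forall fun b => mem_wSet_match.2 (Or.inr (by simp))
      rw [hinter, this, Set.inter_univ] at hE
      refine not_EV_varSet e _ ?_ hE
      simp only [Finset.card_empty] at hd
      omega
    · rw [hinter] at hE
      refine ih (insert u (insert (f u) V)) e hM hdisj'
        (hinj.mono (by simp)) (by omega) ?_
      rw [hunion]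
      refine hE.union (isUpperSet_varSet _) (isUpperSet_wSet _ _) ?_ ?_
      · exact (EV_varSet (n - V.card - 2) _ (by omega)).mono (by omega)
      · refine EV_wSet_of_cover e _ V M _ rfl ?_ ?_ (by omega)
        · exact Finset.disjoint_left.2 fun x hx hxV =>
            (hdisj x (Finset.mem_insert_of_mem hx)).1 hxV
        · intro x y hxy
          have : x ∈ M := by
            by_contra hx
            simp [matchWt, hx] at hxy
          exact Or.inl (Finset.mem_union_left _ this)

/-! ### Colon ideals of the powers -/

/-- The vertices of odd index, which form a vertex cover of the path. -/
def oddSet (n : ℕ) : Finset (Fin n) := Finset.univ.filter fun p => p.val % 2 = 1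

lemma mem_oddSet {p : Fin n} : p ∈ oddSet n ↔ p.val % 2 = 1 := by simp [oddSet]

lemma card_oddSet {k : ℕ} (hn : n = 4 * k + 1) : (oddSet n).card = 2 * k := by
  have : oddSet n = (Finset.univ : Finset (Fin (2 * k))).image
      fun i => ⟨2 * i.val + 1, by omega⟩ := by
    ext p
    simp only [mem_oddSet, Finset.mem_image, Finset.mem_univ, true_and, Fin.ext_iff]
    exact ⟨fun h => ⟨⟨p.val / 2, by omega⟩, by simp only; omega⟩, fun ⟨i, hi⟩ => by omega⟩
  rw [this, Finset.card_image_of_injective, Finset.card_univ, Fintype.card_fin]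
  intro i j hij
  simp only [Fin.mk.injEq] at hij
  omega

/-- Vertex weights `a` are balanced if every positive weight of an even vertex exceeds the weight of
some vertex at distance two by at most one. -/
def BalancedWt (a : Fin n → ℕ) : Prop :=
  ∀ v : Fin n, v.val % 2 = 0 → 0 < a v →
    ∃ u : Fin n, (u.val = v.val + 2 ∨ v.val = u.val + 2) ∧ a v ≤ a u + 1

lemma EV_odd {k : ℕ} (hn : n = 4 * k + 1) (t : ℕ) (a : Fin n → ℕ) {v : Fin n}
    (hv : v.val % 2 = 1) : EV K (2 * k) (wSet {v} (pathWt t a)) := by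
  have hvO := mem_oddSet.2 hv
  refine EV_wSet_of_cover _ _ {v} ((oddSet n).erase v) _ rfl (by simp) ?_ ?_
  · intro x y hxy
    have hxy' : x.val + 1 = y.val := by
      by_contra h
      simp [pathWt, h] at hxy
    simp only [Finset.mem_union, Finset.mem_erase, Finset.mem_singleton, mem_oddSet]
    have : x.val % 2 = 1 ∨ y.val % 2 = 1 := by omega
    tauto
  · have := Finset.card_erase_add_one hvO
    rw [card_oddSet hn] at this
    rw [Finset.card_singleton]
    omega

/-- For even `v`, the odd vertex between `v` and `u` is not needed in a cover: modulo `x_v` the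
edge joining it to `u` imposes no condition. -/
lemma EV_even {k : ℕ} (hn : n = 4 * k + 1) (t : ℕ) (a : Fin n → ℕ) {v u : Fin n}
    (hv : v.val % 2 = 0) (huv : u.val = v.val + 2 ∨ v.val = u.val + 2) (ha : a v ≤ a u) :
    EV K (2 * k) (wSet {v} (pathWt t a)) := by
  obtain ⟨w, hw⟩ : ∃ w : Fin n, (u.val = w.val + 1 ∧ w.val = v.val + 1) ∨
      (v.val = w.val + 1 ∧ w.val = u.val + 1) := by
    rcases huv with h | h
    · exact ⟨⟨v.val + 1, by omega⟩, Or.inl ⟨h, rfl⟩⟩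
    · exact ⟨⟨u.val + 1, by omega⟩, Or.inr ⟨h, rfl⟩⟩
  -- modulo `x_v`, the condition on the edge `{u, w}` follows from the one on `{v, w}`
  let c : Fin n → Fin n → ℕ := fun x y =>
    if (x = u ∧ y = w) ∨ (x = w ∧ y = u) then 0 else pathWt t a x y
  have hc : wSet {v} (pathWt t a) = wSet {v} c := by
    ext b
    simp only [wSet, Set.mem_ofPred_eq, Finset.mem_singleton, exists_eq_left]
    constructor
    · rintro (h | h)
      · exact Or.inl h
      · refine Or.inr fun x y => le_trans ?_ (h x y)
        simp only [c]
        split_ifs <;> simp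
    · rintro (h | h)
      · exact Or.inl h
      · by_cases hb : 0 < b v
        · exact Or.inl hb
        refine Or.inr fun x y => ?_
        have hxy := h x y
        by_cases hcase : (x = u ∧ y = w) ∨ (x = w ∧ y = u)
        · have hne1 : ¬ ((v = u ∧ w = w) ∨ (v = w ∧ w = u)) := by
            simp only [Fin.ext_iff]; omega
          have hne2 : ¬ ((w = u ∧ v = w) ∨ (w = w ∧ v = u)) := by
            simp only [Fin.ext_iff]; omega
          have h1 := h v w
          have h2 := h w v
          simp only [c, if_neg hne1, if_neg hne2, pathWt] at h1 h2
          rw [pathWt]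
          rcases hcase with ⟨rfl, rfl⟩ | ⟨rfl, rfl⟩ <;> split_ifs at * <;> omega
        · simpa only [c, if_neg hcase] using hxy
  rw [hc]
  have hwO : w ∈ oddSet n := mem_oddSet.2 (by omega)
  refine EV_wSet_of_cover _ _ {v} ((oddSet n).erase w) _ rfl ?_ ?_ ?_
  · simp [mem_oddSet, hv]
  · intro x y hxy
    have hcase : ¬ ((x = u ∧ y = w) ∨ (x = w ∧ y = u)) := by
      intro h
      simp [c, h] at hxy
    have hxy' : x.val + 1 = y.val := by
      by_contra h
      simp [c, pathWt, h] at hxy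
    simp only [Finset.mem_union, Finset.mem_erase, Finset.mem_singleton, mem_oddSet]
    simp only [Fin.ext_iff, Ne] at *
    omega
  · have := Finset.card_erase_add_one hwO
    rw [card_oddSet hn] at this
    rw [Finset.card_singleton]
    omega

lemma decAt_pathWt (t : ℕ) (a : Fin n → ℕ) {v : Fin n} (hv : 0 < a v) :
    decAt v (pathWt t (Function.update a v (a v - 1))) = pathWt t a := by
  funext x y
  simp only [decAt, pathWt, Function.update_apply]
  by_cases hxy : x.val + 1 = y.val
  · have : x ≠ y := fun h => by simp [h] at hxy
    simp only [if_pos hxy]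
    by_cases hx : x = v <;> by_cases hy : y = v
    · exact absurd (hx.trans hy.symm) this
    all_goals simp only [hx, hy, if_true, if_false]
    all_goals omega
  · simp [hxy]

/-- For balanced `a`, the colon ideal `J(P_n) ^ t : x^a` inherits depth at least `2k + 1` from
`J(P_n) ^ t`. -/
lemma EV_of_balanced {k t : ℕ} (hn : n = 4 * k + 1)
    (hE : EV K (2 * k + 1) (wSet (n := n) ∅ (pathWt t 0))) :
    ∀ (N : ℕ) (a : Fin n → ℕ), ∑ i, a i = N → BalancedWt a →
      EV K (2 * k + 1) (wSet ∅ (pathWt t a)) := by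
  intro N
  induction N with
  | zero =>
    intro a ha _
    have : a = 0 := funext fun i => by simpa using (Finset.sum_eq_zero_iff.1 ha) i (by simp)
    rwa [this]
  | succ N ih =>
    intro a ha hQ
    have hsum : ∀ v, 0 < a v → ∑ i, Function.update a v (a v - 1) i = N := by
      intro v hv
      have h1 := Finset.sum_update_of_mem (Finset.mem_univ v) a (a v - 1)
      have h2 := Finset.add_sum_erase Finset.univ a (Finset.mem_univ v)
      rw [Finset.sdiff_singleton_eq_erase] at h1
      omega
    by_cases hev : ∃ v : Fin n, v.val % 2 = 0 ∧ 0 < a v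
    · -- lower an even vertex of maximal weight
      obtain ⟨v0, hv0, hav0⟩ := hev
      obtain ⟨v, hv, hmax⟩ := Finset.exists_max_image
        (Finset.univ.filter fun v : Fin n => v.val % 2 = 0) a ⟨v0, by simp [hv0]⟩
      simp only [Finset.mem_filter, Finset.mem_univ, true_and] at hv hmax
      have hav : 0 < a v := hav0.trans_le (hmax v0 hv0)
      obtain ⟨u, huv, hau⟩ := hQ v hv hav
      have hne : u ≠ v := fun h => by simp [h] at huv
      rw [← decAt_pathWt t a hav]
      refine EV.colon_left (by simp) (ih _ (hsum v hav) ?_) ?_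
      · intro x hx hax
        by_cases hxv : x = v
        · subst hxv
          refine ⟨u, huv, ?_⟩
          simp only [Function.update_self, Function.update_of_ne hne] at hax ⊢
          omega
        · rw [Function.update_of_ne hxv] at hax ⊢
          obtain ⟨y, hy, hay⟩ := hQ x hx hax
          refine ⟨y, hy, ?_⟩
          by_cases hyv : y = v
          · subst hyv
            have := hmax x hx
            rw [Function.update_self]
            omega
          · rwa [Function.update_of_ne hyv]
      · refine EV_even hn t _ hv huv ?_
        rw [Function.update_self, Function.update_of_ne hne]
        omega
    · push Not at hev
      obtain ⟨v, hav⟩ : ∃ v, 0 < a v := by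
        by_contra! h
        have : ∑ i, a i = 0 := Finset.sum_eq_zero fun i _ => by simpa using h i
        omega
      have hv : v.val % 2 = 1 := by
        by_contra h
        have := hev v (by omega)
        omega
      rw [← decAt_pathWt t a hav]
      refine EV.colon_left (by simp) (ih _ (hsum v hav) ?_) (EV_odd hn t _ hv)
      intro x hx hax
      have hxv : x ≠ v := fun h => by rw [h] at hx; omega
      rw [Function.update_of_ne hxv] at hax
      have := hev x hx
      omega

/-- Exponent of a monomial `x^a` such that the colon ideal `J(P_n) ^ t : x^a` is the cover ideal
of a matching. The subtraction in the odd case does not truncate if `k ≤ t`. -/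
def witness (n k t : ℕ) (p : Fin n) : ℕ :=
  if p.val % 2 = 0 then min p.val (4 * k - p.val) / 2
  else t - (min p.val (4 * k - p.val) + 1) / 2

lemma balanced_witness {k : ℕ} (hn : n = 4 * k + 1) (t : ℕ) : BalancedWt (witness n k t) := by
  intro v hv hav
  simp only [witness, hv, if_true] at hav
  by_cases h : v.val < 2 * k
  · refine ⟨⟨v.val - 2, by omega⟩, Or.inr ?_, ?_⟩
    · simp only; omega
    · simp only [witness, hv, if_true]
      split_ifs <;> omega
  · refine ⟨⟨v.val + 2, by omega⟩, Or.inl ?_, ?_⟩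
    · simp only
    · simp only [witness, hv, if_true]
      split_ifs <;> omega

/-- The partner of an odd vertex: its neighbour away from the middle vertex of the path. The `min`
only keeps the value in range at the last vertex, which is even. -/
def partner {k : ℕ} (hn : n = 4 * k + 1) (p : Fin n) : Fin n :=
  ⟨if p.val < 2 * k then p.val - 1 else min (p.val + 1) (4 * k), by split_ifs <;> omega⟩

lemma wSet_witness {k t : ℕ} (hn : n = 4 * k + 1) (ht : k ≤ t) :
    wSet ∅ (pathWt t (witness n k t)) = wSet ∅ (matchWt (oddSet n) (partner hn)) := by
  ext b
  rw [mem_wSet_match]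
  simp only [wSet, Set.mem_ofPred_eq, Finset.notMem_empty, false_and, exists_false, false_or,
    mem_oddSet]
  constructor
  · intro h u hu
    have h1 := h u (partner hn u)
    have h2 := h (partner hn u) u
    have hp : (partner hn u).val =
      if u.val < 2 * k then u.val - 1 else min (u.val + 1) (4 * k) := rfl
    simp only [pathWt, witness, hu, one_ne_zero, if_false] at h1 h2
    have hlt := u.isLt
    generalize (partner hn u).val = q at hp h1 h2
    by_cases huk : u.val < 2 * k
    · rw [if_pos huk] at hp
      subst hp
      split_ifs at h1 h2 <;> omega
    · rw [if_neg huk] at hp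
      split_ifs at h1 h2 <;> omega
  · intro h u w
    rw [pathWt]
    split_ifs with huw
    · have hlt := w.isLt
      rcases Nat.mod_two_eq_zero_or_one u.val with hu | hu
      · have hw : w.val % 2 = 1 := by omega
        simp only [witness, hu, hw, if_true]
        by_cases hwk : w.val < 2 * k
        · have : u = partner hn w := Fin.ext (by simp only [partner, hwk, if_true]; omega)
          have := this ▸ h w hw
          simp only [one_ne_zero, if_false]
          omega
        · simp only [one_ne_zero, if_false]
          omega
      · have hw : w.val % 2 = 0 := by omega
        simp only [witness, hu, hw, if_true]
        by_cases huk : u.val < 2 * k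
        · simp only [one_ne_zero, if_false]
          omega
        · have : w = partner hn u := Fin.ext (by simp only [partner, huk, if_false]; omega)
          have := this ▸ h u hu
          simp only [one_ne_zero, if_false]
          omega
    · exact Nat.zero_le _

lemma not_EV_path {k t : ℕ} (hk : 1 ≤ k) (hn : n = 4 * k + 1) (ht : k ≤ t) :
    ¬ EV K (2 * k + 1) (wSet (n := n) ∅ (pathWt t 0)) := by
  intro hE
  have h := EV_of_balanced hn hE _ _ rfl (balanced_witness hn t)
  rw [wSet_witness hn ht] at h
  refine not_EV_match (partner hn) (oddSet n) ∅ _ ?_ ?_ ?_ ?_ h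
  · exact ⟨⟨1, by omega⟩, mem_oddSet.2 rfl⟩
  · intro u hu
    rw [mem_oddSet] at hu
    refine ⟨by simp, by simp, fun u' hu' he => ?_⟩
    rw [mem_oddSet, ← he] at hu'
    simp only [partner] at hu'
    split_ifs at hu' <;> omega
  · intro u hu w hw he
    rw [Finset.mem_coe, mem_oddSet] at hu hw
    simp only [partner, Fin.mk.injEq] at he
    apply Fin.ext
    split_ifs at he <;> omega
  · rw [card_oddSet hn, Finset.card_empty]
    omega

lemma EV_path {k : ℕ} (hn : n = 4 * k + 1) (t : ℕ) :
    EV K (2 * k) (wSet (n := n) ∅ (pathWt t 0)) := by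
  refine EV_wSet_of_cover _ _ ∅ (oddSet n) _ rfl (by simp) ?_ ?_
  · intro x y hxy
    have hxy' : x.val + 1 = y.val := by
      by_contra h
      simp [pathWt, h] at hxy
    simp only [Finset.mem_union, mem_oddSet, Finset.notMem_empty, or_false]
    omega
  · rw [card_oddSet hn, Finset.card_empty]
    omega

end Path

/-- For the odd path `P_n` with `n = 4k + 1` (`k ≥ 1`) and every `t ≥ k`,
`depth(R/J(P_n)^t) = 2k`. -/
theorem depth_coverIdeal_pow_odd_path_one_stable (K : Type*) [Field K] (k n t : ℕ)
    (hk : 1 ≤ k) (hn : n = 4 * k + 1) (ht : k ≤ t) :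
    depthQuot K n ((coverIdeal K (SimpleGraph.pathGraph n)) ^ t) = 2 * k := by
  rw [coverIdeal_path_pow, depthQuot]
  have hle : monIdeal K (wSet (n := n) ∅ (pathWt t 0)) ≤ maxIdeal K n := by
    intro f
    rw [maxIdeal_eq, mem_monIdeal (isUpperSet_wSet _ _), mem_monIdeal (isUpperSet_varSet _)]
    intro h b hb
    have := mem_wSet_path.1 (h b hb) ⟨0, by omega⟩ ⟨1, by omega⟩ rfl
    by_cases h0 : 0 < b ⟨0, by omega⟩
    · exact ⟨_, Finset.mem_univ _, h0⟩
    · exact ⟨⟨1, by omega⟩, Finset.mem_univ _, by omega⟩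
  simp only [exists_isRegular_iff_extVanish (maxIdeal_ne_top K n) hle]
  refine IsGreatest.csSup_eq ⟨EV_path hn t, fun d hd => ?_⟩
  by_contra! hlt
  exact not_EV_path hk hn ht (EV.mono hd hlt)
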